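/- arXiv:1706.00938 — 2 statements merged into one kernel-verified Lean document; each statement's English description precedes it below -/
import Mathlib

section
/- Entropy balance of one engine cycle (Eq. (49) of the paper): Let ρ_W and ρ_S be density matrices on ℂ^{d_W} and ℂ^{d_S}, let ψ ∈ ℂ^{d_D} be a unit vector, let G be a unitary on ℂ^{d_W} ⊗ ℂ^{d_S} ⊗ ℂ^{d_D}, and let {P_x}_{x∈X} be a complete orthogonal family of projections on ℂ^{d_D}. Define σ := ∑_{x∈X} (1 ⊗ 1 ⊗ P_x) G (ρ_W ⊗ ρ_S ⊗ |ψ⟩⟨ψ|) G† (1 ⊗ 1 ⊗ P_x), and let ρ'_W, ρ'_S, ρ'_D be its three marginal states (partial traces over the other two factors). Then S(ρ_W) + S(ρ_S) ≤ S(ρ'_W) + S(ρ'_S) + S(ρ'_D). -/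
open Matrix
open scoped Kronecker Matrix ComplexOrder

noncomputable section

/-- A density matrix: positive semidefinite with unit trace. -/
def IsDensityMatrix {n : Type*} [Fintype n] (ρ : Matrix n n ℂ) : Prop :=
  ρ.PosSemidef ∧ ρ.trace = 1

/-- von Neumann entropy `S(ρ) = -∑ λᵢ log λᵢ` (junk value 0 if not Hermitian). -/
noncomputable def vnEntropy {n : Type*} [Fintype n] [DecidableEq n]
    (ρ : Matrix n n ℂ) : ℝ :=
  if h : ρ.IsHermitian then -∑ i, (h.eigenvalues i) * Real.log (h.eigenvalues i) else 0

/-- Non-equilibrium free energy `F(ρ) = tr(Hρ) - kT S(ρ)`. -/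
noncomputable def freeEnergy {n : Type*} [Fintype n] [DecidableEq n]
    (kT : ℝ) (H ρ : Matrix n n ℂ) : ℝ :=
  (Matrix.trace (H * ρ)).re - kT * vnEntropy ρ

/-- Least eigenvalue of a Hermitian matrix (junk value 0 if not Hermitian). -/
noncomputable def lambdaMin {n : Type*} [Fintype n] [DecidableEq n]
    (H : Matrix n n ℂ) : ℝ :=
  if h : H.IsHermitian then ⨅ i, h.eigenvalues i else 0

/-- Partial trace over the second tensor factor. -/
def ptrace2 {m n : Type*} [Fintype n]
    (σ : Matrix (m × n) (m × n) ℂ) : Matrix m m ℂ :=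
  fun i j => ∑ k, σ (i, k) (j, k)

/-- Partial trace over the first tensor factor. -/
def ptrace1 {m n : Type*} [Fintype m]
    (σ : Matrix (m × n) (m × n) ℂ) : Matrix n n ℂ :=
  fun k l => ∑ i, σ (i, k) (i, l)

/-- Outer product `|v⟩⟨v|`. -/
def outer {n : Type*} (v : n → ℂ) : Matrix n n ℂ :=
  Matrix.vecMulVec v (star v)

/-- Kronecker product of vectors. -/
def kronVec {m n : Type*} (v : m → ℂ) (w : n → ℂ) : m × n → ℂ :=
  fun p => v p.1 * w p.2

lemma hermDiag {n : Type*} [Fintype n] [DecidableEq n] {A : Matrix n n ℂ} (h : A.IsHermitian) :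
    ∃ (U : Matrix n n ℂ) (a : n → ℝ), Uᴴ * U = 1 ∧ U * Uᴴ = 1 ∧
      A = U * diagonal (fun i => (a i : ℂ)) * Uᴴ ∧
      vnEntropy A = ∑ i, Real.negMulLog (a i) ∧ (A.PosSemidef → ∀ i, 0 ≤ a i) ∧
      A.trace = ∑ i, (a i : ℂ) := by
  refine ⟨h.eigenvectorUnitary, h.eigenvalues, ?_, ?_, ?_, ?_, ?_, ?_⟩
  · exact Unitary.coe_star_mul_self h.eigenvectorUnitary
  · exact Unitary.coe_mul_star_self h.eigenvectorUnitary
  · have := h.spectral_theorem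
    rw [Unitary.conjStarAlgAut_apply] at this
    exact this
  · simp [vnEntropy, h, Real.negMulLog]
  · intro hp i
    exact hp.eigenvalues_nonneg i
  · exact h.trace_eq_sum_eigenvalues

lemma densDiag {n : Type*} [Fintype n] [DecidableEq n] {A : Matrix n n ℂ} (h : IsDensityMatrix A) :
    ∃ (U : Matrix n n ℂ) (a : n → ℝ), Uᴴ * U = 1 ∧ U * Uᴴ = 1 ∧
      A = U * diagonal (fun i => (a i : ℂ)) * Uᴴ ∧
      vnEntropy A = ∑ i, Real.negMulLog (a i) ∧ (∀ i, 0 ≤ a i) ∧ ∑ i, a i = 1 := by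
  obtain ⟨U, a, h1, h2, h3, h4, h5, h6⟩ := hermDiag h.1.isHermitian
  refine ⟨U, a, h1, h2, h3, h4, h5 h.1, ?_⟩
  rw [h.2] at h6
  exact_mod_cast h6.symm

lemma densEntropy_nonneg {n : Type*} [Fintype n] [DecidableEq n] {A : Matrix n n ℂ}
    (h : IsDensityMatrix A) : 0 ≤ vnEntropy A := by
  obtain ⟨U, a, h1, h2, h3, h4, h5, h6⟩ := densDiag h
  rw [h4]
  refine Finset.sum_nonneg fun i _ => Real.negMulLog_nonneg (h5 i) ?_
  rw [← h6]
  exact Finset.single_le_sum (fun j _ => h5 j) (Finset.mem_univ i)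

/-- Gibbs-type pointwise inequality. -/
lemma gibbs_pt {q r : ℝ} (hq : 0 ≤ q) (hr : 0 ≤ r) (h : r = 0 → q = 0) :
    Real.negMulLog q ≤ -q * Real.log r + (r - q) := by
  rcases hq.eq_or_lt with rfl | hq
  · simpa using hr
  have hr' : 0 < r := lt_of_le_of_ne hr fun e => hq.ne' (h e.symm)
  have := Real.log_le_sub_one_of_pos (div_pos hr' hq)
  rw [Real.log_div hr'.ne' hq.ne'] at this
  have h2 := mul_le_mul_of_nonneg_left this hq.le
  have h3 : q * (r / q - 1) = r - q := by field_simp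
  rw [h3] at h2
  unfold Real.negMulLog
  linarith

/-- Classical subadditivity for two systems. -/
lemma subadd2 {α β : Type*} [Fintype α] [Fintype β] (q : α × β → ℝ) (hq : ∀ i, 0 ≤ q i)
    (hs : ∑ i, q i = 1) :
    ∑ i, Real.negMulLog (q i) ≤ ∑ a, Real.negMulLog (∑ b, q (a, b))
      + ∑ b, Real.negMulLog (∑ a, q (a, b)) := by
  set A : α → ℝ := fun a => ∑ b, q (a, b) with hA
  set B : β → ℝ := fun b => ∑ a, q (a, b) with hB
  have hA0 : ∀ a, 0 ≤ A a := fun a => Finset.sum_nonneg fun _ _ => hq _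
  have hB0 : ∀ b, 0 ≤ B b := fun b => Finset.sum_nonneg fun _ _ => hq _
  have qA : ∀ a b, q (a, b) ≤ A a := fun a b =>
    Finset.single_le_sum (f := fun b => q (a, b)) (fun _ _ => hq _) (Finset.mem_univ b)
  have qB : ∀ a b, q (a, b) ≤ B b := fun a b =>
    Finset.single_le_sum (f := fun a => q (a, b)) (fun _ _ => hq _) (Finset.mem_univ a)
  have sA : ∑ a, A a = 1 := by rw [← hs, Fintype.sum_prod_type]
  have sB : ∑ b, B b = 1 := by rw [← hs, Fintype.sum_prod_type, Finset.sum_comm]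
  have key : ∀ a b, Real.negMulLog (q (a, b)) ≤
      -q (a, b) * Real.log (A a) + -q (a, b) * Real.log (B b) + (A a * B b - q (a, b)) := by
    intro a b
    rcases (hA0 a).eq_or_lt with h | h
    · have h0 : q (a, b) = 0 := le_antisymm (h ▸ qA a b) (hq _)
      simp [h0, ← h]
    rcases (hB0 b).eq_or_lt with h' | h'
    · have h0 : q (a, b) = 0 := le_antisymm (h' ▸ qB a b) (hq _)
      simp [h0, ← h']
    have := gibbs_pt (hq (a, b)) (mul_pos h h').le (fun e => absurd e (mul_pos h h').ne')
    rw [Real.log_mul h.ne' h'.ne'] at this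
    linarith
  have e1 : ∑ a, ∑ b, -q (a, b) * Real.log (A a) = ∑ a, Real.negMulLog (A a) := by
    refine Finset.sum_congr rfl fun a _ => ?_
    rw [← Finset.sum_mul, Finset.sum_neg_distrib]; rfl
  have e2 : ∑ a, ∑ b, -q (a, b) * Real.log (B b) = ∑ b, Real.negMulLog (B b) := by
    rw [Finset.sum_comm]
    refine Finset.sum_congr rfl fun b _ => ?_
    rw [← Finset.sum_mul, Finset.sum_neg_distrib]; rfl
  have e3 : ∑ a, ∑ b, (A a * B b - q (a, b)) = 0 := by
    simp only [Finset.sum_sub_distrib, ← Finset.mul_sum, sB, mul_one, sA]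
    rw [← Fintype.sum_prod_type (f := q), hs, sub_self]
  calc ∑ i, Real.negMulLog (q i) = ∑ a, ∑ b, Real.negMulLog (q (a, b)) := Fintype.sum_prod_type _
    _ ≤ ∑ a, ∑ b, (-q (a, b) * Real.log (A a) + -q (a, b) * Real.log (B b)
          + (A a * B b - q (a, b))) :=
        Finset.sum_le_sum fun a _ => Finset.sum_le_sum fun b _ => key a b
    _ = _ := by
        simp only [Finset.sum_add_distrib, e1, e2, e3, add_zero]
        rfl

/-- Additivity for products. -/
lemma add2 {α β : Type*} [Fintype α] [Fintype β] (a : α → ℝ) (b : β → ℝ)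
    (ha : ∑ i, a i = 1) (hb : ∑ i, b i = 1) :
    ∑ i : α × β, Real.negMulLog (a i.1 * b i.2)
      = ∑ i, Real.negMulLog (a i) + ∑ i, Real.negMulLog (b i) := by
  simp only [Fintype.sum_prod_type, Real.negMulLog_mul, Finset.sum_add_distrib, ← Finset.mul_sum,
    ← Finset.sum_mul, ha, hb, one_mul]

/-- Entropy increases under doubly stochastic maps. -/
lemma ds_entropy {I : Type*} [Fintype I] (D : I → I → ℝ) (hD : ∀ i j, 0 ≤ D i j)
    (hr : ∀ i, ∑ j, D i j = 1) (hc : ∀ j, ∑ i, D i j = 1) (p : I → ℝ) (hp : ∀ i, 0 ≤ p i) :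
    ∑ i, Real.negMulLog (p i) ≤ ∑ i, Real.negMulLog (∑ j, D i j * p j) := by
  calc ∑ j, Real.negMulLog (p j) = ∑ j, ∑ i, D i j * Real.negMulLog (p j) := by
        simp only [← Finset.sum_mul, hc, one_mul]
    _ = ∑ i, ∑ j, D i j * Real.negMulLog (p j) := Finset.sum_comm
    _ ≤ _ := Finset.sum_le_sum fun i _ => by
        have := Real.concaveOn_negMulLog.le_map_sum (t := Finset.univ) (w := D i) (p := p)
          (fun j _ => hD i j) (hr i) (fun j _ => hp j)
        simpa only [smul_eq_mul] using this

lemma ptrace2_conj {m n : Type*} [Fintype m] [Fintype n] [DecidableEq m] [DecidableEq n]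
    (σ : Matrix (m × n) (m × n) ℂ) (A : Matrix m m ℂ) (B : Matrix n n ℂ) (hB : B * Bᴴ = 1) :
    ptrace2 ((A ⊗ₖ B)ᴴ * σ * (A ⊗ₖ B)) = Aᴴ * ptrace2 σ * A := by
  have t1 : ∀ τ : Matrix (m × n) (m × n) ℂ,
      ptrace2 (τ * ((1 : Matrix m m ℂ) ⊗ₖ B)) = ptrace2 (((1 : Matrix m m ℂ) ⊗ₖ B) * τ) := by
    intro τ
    ext i j
    simp only [ptrace2, Matrix.mul_apply, Fintype.sum_prod_type, kroneckerMap_apply,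
      Matrix.one_apply, ite_mul, one_mul, zero_mul, mul_ite, mul_zero]
    simp only [Finset.sum_comm (s := (Finset.univ : Finset m)) (t := (Finset.univ : Finset n)),
      Finset.sum_ite_eq, Finset.sum_ite_eq', Finset.mem_univ, if_true]
    rw [Finset.sum_comm]
    exact Finset.sum_congr rfl fun _ _ => Finset.sum_congr rfl fun _ _ => mul_comm _ _
  have t2 : ∀ τ : Matrix (m × n) (m × n) ℂ,
      ptrace2 (τ * (A ⊗ₖ (1 : Matrix n n ℂ))) = ptrace2 τ * A := by
    intro τ
    ext i j
    simp only [ptrace2, Matrix.mul_apply, Fintype.sum_prod_type, kroneckerMap_apply,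
      Matrix.one_apply, mul_ite, mul_one, mul_zero, Finset.sum_ite_eq, Finset.sum_ite_eq',
      Finset.mem_univ, if_true, Finset.sum_mul]
    rw [Finset.sum_comm]
  have t3 : ∀ τ : Matrix (m × n) (m × n) ℂ,
      ptrace2 ((Aᴴ ⊗ₖ (1 : Matrix n n ℂ)) * τ) = Aᴴ * ptrace2 τ := by
    intro τ
    ext i j
    simp only [ptrace2, Matrix.mul_apply, Fintype.sum_prod_type, kroneckerMap_apply,
      Matrix.one_apply, mul_ite, ite_mul, zero_mul, mul_one, mul_zero, Finset.sum_ite_eq,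
      Finset.sum_ite_eq', Finset.mem_univ, if_true, Finset.mul_sum]
    rw [Finset.sum_comm]
  have f1 : A ⊗ₖ B = (A ⊗ₖ (1 : Matrix n n ℂ)) * ((1 : Matrix m m ℂ) ⊗ₖ B) := by
    rw [← mul_kronecker_mul, Matrix.mul_one, Matrix.one_mul]
  have f2 : (A ⊗ₖ B)ᴴ = (Aᴴ ⊗ₖ (1 : Matrix n n ℂ)) * ((1 : Matrix m m ℂ) ⊗ₖ Bᴴ) := by
    rw [← mul_kronecker_mul, Matrix.mul_one, Matrix.one_mul, conjTranspose_kronecker]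
  have f3 : ((1 : Matrix m m ℂ) ⊗ₖ B) * ((Aᴴ ⊗ₖ (1 : Matrix n n ℂ)) * ((1 : Matrix m m ℂ) ⊗ₖ Bᴴ))
      = Aᴴ ⊗ₖ (1 : Matrix n n ℂ) := by
    rw [← mul_kronecker_mul, ← mul_kronecker_mul]
    simp [hB]
  rw [f1, ← Matrix.mul_assoc, t1, ← f1, f2, ← t3, ← t2]
  simp only [← Matrix.mul_assoc]
  simp only [← Matrix.mul_assoc] at f3
  rw [f3]

lemma ptrace1_eq_ptrace2 {m n : Type*} [Fintype m]
    (σ : Matrix (m × n) (m × n) ℂ) :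
    ptrace1 σ = ptrace2 (σ.submatrix Prod.swap Prod.swap) := rfl

lemma ptrace1_conj {m n : Type*} [Fintype m] [Fintype n] [DecidableEq m] [DecidableEq n]
    (σ : Matrix (m × n) (m × n) ℂ) (A : Matrix m m ℂ) (B : Matrix n n ℂ) (hA : A * Aᴴ = 1) :
    ptrace1 ((A ⊗ₖ B)ᴴ * σ * (A ⊗ₖ B)) = Bᴴ * ptrace1 σ * B := by
  have e : (A ⊗ₖ B).submatrix (Equiv.prodComm n m) (Equiv.prodComm n m) = B ⊗ₖ A := by
    ext i j
    simp [kroneckerMap_apply, mul_comm]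
  have e' : (A ⊗ₖ B)ᴴ.submatrix (Equiv.prodComm n m) (Equiv.prodComm n m) = (B ⊗ₖ A)ᴴ := by
    rw [← e]; rfl
  have := ptrace2_conj (σ.submatrix (Equiv.prodComm n m) (Equiv.prodComm n m)) B A hA
  rw [← e', ← e, Matrix.submatrix_mul_equiv, Matrix.submatrix_mul_equiv] at this
  exact this

lemma ptrace2_herm {m n : Type*} [Fintype n] {σ : Matrix (m × n) (m × n) ℂ}
    (h : σ.IsHermitian) : (ptrace2 σ).IsHermitian := by
  ext i j
  simp only [ptrace2, conjTranspose_apply, star_sum]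
  exact Finset.sum_congr rfl fun k _ => h.apply _ _

lemma ptrace1_herm {m n : Type*} [Fintype m] {σ : Matrix (m × n) (m × n) ℂ}
    (h : σ.IsHermitian) : (ptrace1 σ).IsHermitian := by
  ext i j
  simp only [ptrace1, conjTranspose_apply, star_sum]
  exact Finset.sum_congr rfl fun k _ => h.apply _ _

lemma unit_conj {n : Type*} [Fintype n] [DecidableEq n] {A U D : Matrix n n ℂ}
    (h1 : Uᴴ * U = 1) (h : A = U * D * Uᴴ) : Uᴴ * A * U = D := by
  rw [h]
  calc Uᴴ * (U * D * Uᴴ) * U = (Uᴴ * U) * D * (Uᴴ * U) := by simp only [Matrix.mul_assoc]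
    _ = D := by simp [h1]

/-- General core: pinching with unitaries, measured in a unitary basis. -/
lemma pinch_ds {I X : Type*} [Fintype I] [DecidableEq I] [Fintype X]
    (E V : Matrix I I ℂ) (hE : Eᴴ * E = 1) (hE' : E * Eᴴ = 1) (hV : Vᴴ * V = 1)
    (hV' : V * Vᴴ = 1) (Q : X → Matrix I I ℂ) (hQ : ∀ x, (Q x)ᴴ = Q x)
    (hQQ : ∀ x, Q x * Q x = Q x) (hs : ∑ x, Q x = 1) (p : I → ℝ) (hp : ∀ i, 0 ≤ p i) :
    ∃ q : I → ℝ, (∀ i, 0 ≤ q i) ∧ ∑ i, q i = ∑ i, p i ∧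
      ∑ i, Real.negMulLog (p i) ≤ ∑ i, Real.negMulLog (q i) ∧
      ∀ i, (Eᴴ * (∑ x, Q x * (V * diagonal (fun i => (p i : ℂ)) * Vᴴ) * Q x) * E) i i
        = (q i : ℂ) := by
  set M : X → Matrix I I ℂ := fun x => Eᴴ * Q x * V with hM
  have hMH : ∀ x, (M x)ᴴ = Vᴴ * Q x * E := by
    intro x
    simp only [hM, conjTranspose_mul, conjTranspose_conjTranspose, hQ, Matrix.mul_assoc]
  set D : I → I → ℝ := fun i j => ∑ x, Complex.normSq (M x i j) with hDd
  have hD : ∀ i j, 0 ≤ D i j := fun i j => Finset.sum_nonneg fun _ _ => Complex.normSq_nonneg _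
  have r1 : ∑ x, M x * (M x)ᴴ = 1 := by
    have : ∀ x, M x * (M x)ᴴ = Eᴴ * Q x * E := by
      intro x
      rw [hMH]
      calc Eᴴ * Q x * V * (Vᴴ * Q x * E) = Eᴴ * (Q x * (V * Vᴴ) * Q x) * E := by
            simp only [Matrix.mul_assoc]
        _ = _ := by rw [hV', Matrix.mul_one, hQQ]
    simp only [this]
    rw [← Finset.sum_mul, ← Finset.mul_sum, hs, Matrix.mul_one, hE]
  have c1 : ∑ x, (M x)ᴴ * M x = 1 := by
    have : ∀ x, (M x)ᴴ * M x = Vᴴ * Q x * V := by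
      intro x
      rw [hMH]
      calc Vᴴ * Q x * E * (Eᴴ * Q x * V) = Vᴴ * (Q x * (E * Eᴴ) * Q x) * V := by
            simp only [Matrix.mul_assoc]
        _ = _ := by rw [hE', Matrix.mul_one, hQQ]
    simp only [this]
    rw [← Finset.sum_mul, ← Finset.mul_sum, hs, Matrix.mul_one, hV]
  have hr : ∀ i, ∑ j, D i j = 1 := by
    intro i
    have := congrFun (congrFun r1 i) i
    simp only [Matrix.sum_apply, Matrix.mul_apply, conjTranspose_apply, Matrix.one_apply_eq,
      Complex.star_def, Complex.mul_conj] at this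
    simp only [hDd]
    rw [Finset.sum_comm]
    exact_mod_cast this
  have hc : ∀ j, ∑ i, D i j = 1 := by
    intro i
    have := congrFun (congrFun c1 i) i
    simp only [Matrix.sum_apply, Matrix.mul_apply, conjTranspose_apply, Matrix.one_apply_eq,
      Complex.star_def, ← Complex.normSq_eq_conj_mul_self] at this
    simp only [hDd]
    rw [Finset.sum_comm]
    exact_mod_cast this
  refine ⟨fun i => ∑ j, D i j * p j, fun i => Finset.sum_nonneg fun j _ =>
    mul_nonneg (hD i j) (hp j), ?_, ds_entropy D hD hr hc p hp, ?_⟩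
  · rw [Finset.sum_comm]
    simp only [← Finset.sum_mul, hc, one_mul]
  · intro i
    have : Eᴴ * (∑ x, Q x * (V * diagonal (fun i => (p i : ℂ)) * Vᴴ) * Q x) * E
        = ∑ x, M x * diagonal (fun i => (p i : ℂ)) * (M x)ᴴ := by
      rw [Finset.mul_sum, Finset.sum_mul]
      refine Finset.sum_congr rfl fun x _ => ?_
      rw [hMH]
      simp only [hM, Matrix.mul_assoc]
    rw [this]
    simp only [Matrix.sum_apply, Matrix.mul_apply (M := _ * diagonal _), Matrix.mul_diagonal,
      conjTranspose_apply, hDd]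
    push_cast
    rw [Finset.sum_comm]
    refine Finset.sum_congr rfl fun j _ => ?_
    rw [Finset.sum_mul]
    refine Finset.sum_congr rfl fun x _ => ?_
    rw [← Complex.mul_conj, Complex.star_def]
    ring

/-- Eq. (49): subadditivity entropy balance after premeasurement,
objectification and feedback of one engine cycle. -/
theorem cycle_entropy_balance
    {dW dS dD : ℕ} {X : Type*} [Fintype X]
    (ρW : Matrix (Fin dW) (Fin dW) ℂ) (hρW : IsDensityMatrix ρW)
    (ρS : Matrix (Fin dS) (Fin dS) ℂ) (hρS : IsDensityMatrix ρS)
    (ψ : Fin dD → ℂ) (hψ : star ψ ⬝ᵥ ψ = 1)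
    (G : Matrix (Fin dW × Fin dS × Fin dD) (Fin dW × Fin dS × Fin dD) ℂ)
    (hG : G ∈ Matrix.unitaryGroup (Fin dW × Fin dS × Fin dD) ℂ)
    (P : X → Matrix (Fin dD) (Fin dD) ℂ)
    (hPherm : ∀ x, (P x).IsHermitian)
    (hPidem : ∀ x, P x * P x = P x)
    (hPorth : ∀ x y, x ≠ y → P x * P y = 0)
    (hPsum : ∑ x, P x = 1)
    (σ : Matrix (Fin dW × Fin dS × Fin dD) (Fin dW × Fin dS × Fin dD) ℂ)
    (hσ : σ = ∑ x, ((1 : Matrix (Fin dW) (Fin dW) ℂ) ⊗ₖ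
            ((1 : Matrix (Fin dS) (Fin dS) ℂ) ⊗ₖ P x))
        * (G * (ρW ⊗ₖ (ρS ⊗ₖ outer ψ)) * Gᴴ)
        * ((1 : Matrix (Fin dW) (Fin dW) ℂ) ⊗ₖ
            ((1 : Matrix (Fin dS) (Fin dS) ℂ) ⊗ₖ P x))) :
    vnEntropy ρW + vnEntropy ρS
      ≤ vnEntropy (ptrace2 σ) + vnEntropy (ptrace2 (ptrace1 σ))
        + vnEntropy (ptrace1 (ptrace1 σ)) := by
  have hout : IsDensityMatrix (outer ψ) := by
    refine ⟨posSemidef_vecMulVec_self_star ψ, ?_⟩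
    rw [outer, trace_vecMulVec, dotProduct_comm, hψ]
  have hnn := densEntropy_nonneg hout
  obtain ⟨U1, a, hU1, hU1', hA1, hS1, ha, hsa⟩ := densDiag hρW
  obtain ⟨U2, b, hU2, hU2', hA2, hS2, hb, hsb⟩ := densDiag hρS
  obtain ⟨U3, c, hU3, hU3', hA3, hS3, hc, hsc⟩ := densDiag hout
  set Q : X → Matrix (Fin dW × Fin dS × Fin dD) (Fin dW × Fin dS × Fin dD) ℂ := fun x =>
    (1 : Matrix (Fin dW) (Fin dW) ℂ) ⊗ₖ ((1 : Matrix (Fin dS) (Fin dS) ℂ) ⊗ₖ P x) with hQd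
  have hQ : ∀ x, (Q x)ᴴ = Q x := by
    intro x
    simp only [hQd, conjTranspose_kronecker, conjTranspose_one, (hPherm x).eq]
  have hQQ : ∀ x, Q x * Q x = Q x := by
    intro x
    simp only [hQd, ← mul_kronecker_mul, Matrix.mul_one, hPidem]
  have hQs : ∑ x, Q x = 1 := by
    ext ⟨i, j, k⟩ ⟨i', j', k'⟩
    have h := congrFun (congrFun hPsum k) k'
    rw [Matrix.sum_apply] at h
    rw [Matrix.sum_apply, ← one_kronecker_one, ← one_kronecker_one]
    simp only [hQd, kroneckerMap_apply, ← Finset.mul_sum, h]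
  set U := U1 ⊗ₖ (U2 ⊗ₖ U3) with hUd
  have hU : Uᴴ * U = 1 := by
    simp only [hUd, conjTranspose_kronecker, ← mul_kronecker_mul, hU1, hU2, hU3, one_kronecker_one]
  have hU' : U * Uᴴ = 1 := by
    simp only [hUd, conjTranspose_kronecker, ← mul_kronecker_mul, hU1', hU2', hU3',
      one_kronecker_one]
  have hG1 : Gᴴ * G = 1 := Matrix.mem_unitaryGroup_iff'.mp hG
  have hG2 : G * Gᴴ = 1 := Matrix.mem_unitaryGroup_iff.mp hG
  set p : Fin dW × Fin dS × Fin dD → ℝ := fun i => a i.1 * (b i.2.1 * c i.2.2) with hpd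
  have hp : ∀ i, 0 ≤ p i := fun i => mul_nonneg (ha _) (mul_nonneg (hb _) (hc _))
  have hbc : ∑ i : Fin dS × Fin dD, b i.1 * c i.2 = 1 := by
    simp only [Fintype.sum_prod_type, ← Finset.mul_sum, hsc, mul_one, hsb]
  have hps : ∑ i, p i = 1 := by
    rw [Fintype.sum_prod_type]
    simp only [hpd, ← Finset.mul_sum, hbc, mul_one, hsa]
  have hpS : ∑ i, Real.negMulLog (p i) = vnEntropy ρW + (vnEntropy ρS + vnEntropy (outer ψ)) := by
    rw [hS1, hS2, hS3, ← add2 b c hsb hsc]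
    exact add2 a (fun i : Fin dS × Fin dD => b i.1 * c i.2) hsa hbc
  have hτ : G * (ρW ⊗ₖ (ρS ⊗ₖ outer ψ)) * Gᴴ
      = (G * U) * diagonal (fun i => (p i : ℂ)) * (G * U)ᴴ := by
    have hd : diagonal (fun i => (p i : ℂ)) = diagonal (fun i => (a i : ℂ)) ⊗ₖ
        (diagonal (fun i => (b i : ℂ)) ⊗ₖ diagonal (fun i => (c i : ℂ))) := by
      rw [diagonal_kronecker_diagonal, diagonal_kronecker_diagonal]
      simp [hpd]
    have : ρW ⊗ₖ (ρS ⊗ₖ outer ψ) = U * diagonal (fun i => (p i : ℂ)) * Uᴴ := by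
      rw [hd, hUd, conjTranspose_kronecker, conjTranspose_kronecker, ← mul_kronecker_mul,
        ← mul_kronecker_mul, ← mul_kronecker_mul, ← mul_kronecker_mul, ← hA1, ← hA2, ← hA3]
    rw [this, conjTranspose_mul]
    simp only [Matrix.mul_assoc]
  rw [hτ] at hσ
  have hσH : σ.IsHermitian := by
    rw [hσ, Matrix.IsHermitian, conjTranspose_sum]
    refine Finset.sum_congr rfl fun x _ => ?_
    change (Q x * _ * Q x)ᴴ = Q x * _ * Q x
    have hdd : (diagonal (fun i => (p i : ℂ)))ᴴ = diagonal (fun i => (p i : ℂ)) := by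
      rw [diagonal_conjTranspose]
      congr 1
      ext i
      simp
    simp only [conjTranspose_mul, hQ, conjTranspose_conjTranspose, hdd, Matrix.mul_assoc]
  obtain ⟨E1, A, hE1, hE1', hB1, hT1, -, -⟩ := hermDiag (ptrace2_herm hσH)
  obtain ⟨E2, B, hE2, hE2', hB2, hT2, -, -⟩ := hermDiag (ptrace2_herm (ptrace1_herm hσH))
  obtain ⟨E3, C, hE3, hE3', hB3, hT3, -, -⟩ := hermDiag (ptrace1_herm (ptrace1_herm hσH))
  have hE23 : (E2 ⊗ₖ E3) * (E2 ⊗ₖ E3)ᴴ = 1 := by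
    simp only [conjTranspose_kronecker, ← mul_kronecker_mul, hE2', hE3', one_kronecker_one]
  set E := E1 ⊗ₖ (E2 ⊗ₖ E3) with hEd
  have hE : Eᴴ * E = 1 := by
    simp only [hEd, conjTranspose_kronecker, ← mul_kronecker_mul, hE1, hE2, hE3, one_kronecker_one]
  have hE' : E * Eᴴ = 1 := by
    simp only [hEd, conjTranspose_kronecker, ← mul_kronecker_mul, hE1', hE2', hE3',
      one_kronecker_one]
  have hV : (G * U)ᴴ * (G * U) = 1 := by
    rw [conjTranspose_mul, Matrix.mul_assoc, ← Matrix.mul_assoc Gᴴ, hG1, Matrix.one_mul, hU]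
  have hV' : (G * U) * (G * U)ᴴ = 1 := by
    rw [conjTranspose_mul, Matrix.mul_assoc, ← Matrix.mul_assoc U, hU', Matrix.one_mul, hG2]
  obtain ⟨q, hq, hqs, hqe, hqd⟩ := pinch_ds E (G * U) hE hE' hV hV' Q hQ hQQ hQs p hp
  rw [← hσ] at hqd
  rw [hps] at hqs
  have m1 : ∀ i, ∑ jk : Fin dS × Fin dD, q (i, jk) = A i := by
    intro i
    have h := congrFun (congrFun (ptrace2_conj σ E1 (E2 ⊗ₖ E3) hE23) i) i
    rw [unit_conj hE1 hB1, diagonal_apply_eq] at h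
    simp only [ptrace2, ← hEd, hqd] at h
    exact_mod_cast h
  have m23 := ptrace1_conj σ E1 (E2 ⊗ₖ E3) hE1'
  have m2 : ∀ j, ∑ k, ∑ i, q (i, j, k) = B j := by
    intro j
    have h := congrFun (congrFun (ptrace2_conj (ptrace1 σ) E2 E3 hE3') j) j
    rw [unit_conj hE2 hB2, diagonal_apply_eq, ← m23] at h
    simp only [ptrace2, ptrace1, ← hEd, hqd] at h
    exact_mod_cast h
  have m3 : ∀ k, ∑ j, ∑ i, q (i, j, k) = C k := by
    intro k
    have h := congrFun (congrFun (ptrace1_conj (ptrace1 σ) E2 E3 hE2') k) k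
    rw [unit_conj hE3 hB3, diagonal_apply_eq, ← m23] at h
    simp only [ptrace1, ← hEd, hqd] at h
    exact_mod_cast h
  have s1 := subadd2 q hq hqs
  have s2 := subadd2 (fun jk : Fin dS × Fin dD => ∑ i, q (i, jk))
    (fun _ => Finset.sum_nonneg fun _ _ => hq _)
    (by rw [← hqs, Fintype.sum_prod_type (f := q), Finset.sum_comm])
  simp only [m1] at s1
  simp only [m2, m3] at s2
  rw [hT1, hT2, hT3]
  linarith
end
end

section
/- Second law for the net coarse-grained work per cycle (Eq. (50) of the paper): Let H_W, H_S, H_D be Hermitian matrices on ℂ^{d_W}, ℂ^{d_S}, ℂ^{d_D} and kT > 0. Let ρ_W, ρ_S be density matrices, ψ ∈ ℂ^{d_D} a unit vector, {P_x}_{x∈X} a complete orthogonal family of projections on ℂ^{d_D} with [P_x, H_D] = 0 for every x, and G a unitary on ℂ^{d_W} ⊗ ℂ^{d_S} ⊗ ℂ^{d_D} with [G, H_W ⊗ 1 ⊗ 1 + 1 ⊗ H_S ⊗ 1 + 1 ⊗ 1 ⊗ H_D] = 0. Define σ := ∑_{x∈X} (1 ⊗ 1 ⊗ P_x) G (ρ_W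 ⊗ ρ_S ⊗ |ψ⟩⟨ψ|) G† (1 ⊗ 1 ⊗ P_x) with marginals ρ'_W, ρ'_S, ρ'_D. Let Q ∈ ℝ satisfy Landauer's bound Q ≥ kT·S(ρ'_D), and define the work cost of erasure W_R := Re(tr[H_D(|ψ⟩⟨ψ| − ρ'_D)]) + Q and the coarse-grained work W_X := F_{H_W}(ρ'_W) − F_{H_W}(ρ_W). Then W_X − W_R ≤ F_{H_S}(ρ_S) − F_{H_S}(ρ'_S). -/
open Matrix
open scoped Kronecker Matrix ComplexOrder

noncomputable section

namespace NetWork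

set_option linter.unusedSectionVars false
set_option linter.unusedSimpArgs false

lemma gibbs_term {p a b : ℝ} (hp : 0 ≤ p) (ha : 0 ≤ a) (hb : 0 ≤ b)
    (hpa : p ≤ a) (hpb : p ≤ b) :
    Real.negMulLog p ≤ -(p * Real.log a) - p * Real.log b + (a * b - p) := by
  rcases hp.eq_or_lt with h | h
  · subst h
    simpa using mul_nonneg ha hb
  · have ha' : 0 < a := lt_of_lt_of_le h hpa
    have hb' : 0 < b := lt_of_lt_of_le h hpb
    have h1 := Real.log_le_sub_one_of_pos (x := a * b / p) (by positivity)
    rw [Real.log_div (by positivity) (by positivity), Real.log_mul (by positivity) (by positivity)] at h1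
    have h2 := mul_le_mul_of_nonneg_left h1 h.le
    have h3 : p * (a * b / p - 1) = a * b - p := by field_simp
    rw [h3] at h2
    unfold Real.negMulLog
    linarith

lemma subadd {α β : Type*} [Fintype α] [Fintype β] (p : α × β → ℝ) (hp : ∀ i, 0 ≤ p i)
    (h1 : ∑ i, p i = 1) :
    ∑ i, Real.negMulLog (p i) ≤ ∑ a, Real.negMulLog (∑ b, p (a, b))
      + ∑ b, Real.negMulLog (∑ a, p (a, b)) := by
  set f : α → ℝ := fun a => ∑ b, p (a, b) with hf
  set g : β → ℝ := fun b => ∑ a, p (a, b) with hg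
  have hfs : ∑ a, f a = 1 := by rw [← h1, Fintype.sum_prod_type]
  have hgs : ∑ b, g b = 1 := by rw [← h1, Fintype.sum_prod_type_right]
  have key : ∀ i : α × β, Real.negMulLog (p i) ≤
      -(p i * Real.log (f i.1)) - p i * Real.log (g i.2) + (f i.1 * g i.2 - p i) := by
    rintro ⟨a, b⟩
    apply gibbs_term (hp _) (Finset.sum_nonneg fun _ _ => hp _) (Finset.sum_nonneg fun _ _ => hp _)
    · exact Finset.single_le_sum (f := fun b => p (a, b)) (fun _ _ => hp _) (Finset.mem_univ b)
    · exact Finset.single_le_sum (f := fun a => p (a, b)) (fun _ _ => hp _) (Finset.mem_univ a)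
  refine (Finset.sum_le_sum fun i _ => key i).trans (le_of_eq ?_)
  rw [Finset.sum_add_distrib, Finset.sum_sub_distrib, Finset.sum_sub_distrib, h1]
  have e1 : ∑ i : α × β, f i.1 * g i.2 = 1 := by
    rw [Fintype.sum_prod_type]
    simp only [← Finset.mul_sum, hgs, mul_one, hfs]
  have e2 : ∑ i : α × β, -(p i * Real.log (f i.1)) = ∑ a, Real.negMulLog (f a) := by
    rw [Fintype.sum_prod_type]
    refine Finset.sum_congr rfl fun a _ => ?_
    simp only [Finset.sum_neg_distrib, ← Finset.sum_mul, Real.negMulLog, neg_mul]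
    rfl
  have e3 : ∑ i : α × β, p i * Real.log (g i.2) = -∑ b, Real.negMulLog (g b) := by
    rw [Fintype.sum_prod_type_right, ← Finset.sum_neg_distrib]
    refine Finset.sum_congr rfl fun a _ => ?_
    simp only [← Finset.sum_mul, Real.negMulLog, neg_mul, neg_neg]
    rfl
  rw [e1, e2, e3]
  ring

/-- entropy of a product distribution -/
lemma prodEnt {α β : Type*} [Fintype α] [Fintype β] (p : α → ℝ) (q : β → ℝ)
    (h1 : ∑ i, p i = 1) (h2 : ∑ i, q i = 1) :
    ∑ i : α × β, Real.negMulLog (p i.1 * q i.2) = ∑ a, Real.negMulLog (p a)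
      + ∑ b, Real.negMulLog (q b) := by
  rw [Fintype.sum_prod_type]
  simp only [Real.negMulLog_mul, Finset.sum_add_distrib, ← Finset.mul_sum, ← Finset.sum_mul, h1, h2,
    one_mul]

/-- entropy increase under a unital channel, relative to fixed bases -/
lemma unital {n X : Type*} [Fintype n] [DecidableEq n] [Fintype X]
    (M : X → Matrix n n ℂ) (hM1 : ∑ x, M x * (M x)ᴴ = 1) (hM2 : ∑ x, (M x)ᴴ * M x = 1)
    (r : n → ℝ) (hr : ∀ i, 0 ≤ r i) (T : Matrix n n ℂ)
    (hT : T = ∑ x, M x * diagonal (fun i => (r i : ℂ)) * (M x)ᴴ) :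
    (∀ i, 0 ≤ (T i i).re) ∧ ∑ i, (T i i).re = ∑ i, r i ∧
      ∑ i, Real.negMulLog (r i) ≤ ∑ i, Real.negMulLog (T i i).re := by
  set B : n → n → ℝ := fun a m => ∑ x, Complex.normSq (M x a m) with hB
  have hB0 : ∀ a m, 0 ≤ B a m := fun a m => Finset.sum_nonneg fun _ _ => Complex.normSq_nonneg _
  have hBr : ∀ a, ∑ m, B a m = 1 := by
    intro a
    have h := congrFun (congrFun hM1 a) a
    rw [Matrix.sum_apply, one_apply_eq] at h
    simp only [mul_apply, conjTranspose_apply, RCLike.star_def, Complex.mul_conj] at h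
    rw [Finset.sum_comm] at h
    exact_mod_cast h
  have hBc : ∀ m, ∑ a, B a m = 1 := by
    intro a
    have h := congrFun (congrFun hM2 a) a
    rw [Matrix.sum_apply, one_apply_eq] at h
    simp only [mul_apply, conjTranspose_apply, RCLike.star_def, ← Complex.normSq_eq_conj_mul_self] at h
    rw [Finset.sum_comm] at h
    exact_mod_cast h
  have hTa : ∀ a, (T a a).re = ∑ m, B a m * r m := by
    intro a
    have : T a a = ((∑ m, B a m * r m : ℝ) : ℂ) := by
      rw [hT, Matrix.sum_apply]
      simp only [mul_apply (M := _ * _), mul_diagonal, conjTranspose_apply, RCLike.star_def, hB]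
      push_cast
      rw [Finset.sum_comm]
      refine Finset.sum_congr rfl fun m _ => ?_
      rw [Finset.sum_mul]
      refine Finset.sum_congr rfl fun x _ => ?_
      rw [← Complex.mul_conj]; ring
    rw [this, Complex.ofReal_re]
  refine ⟨fun a => ?_, ?_, ?_⟩
  · rw [hTa]; exact Finset.sum_nonneg fun m _ => mul_nonneg (hB0 _ _) (hr _)
  · simp only [hTa]
    rw [Finset.sum_comm]
    simp only [← Finset.sum_mul, hBc, one_mul]
  · have key : ∀ a, ∑ m, B a m * Real.negMulLog (r m) ≤ Real.negMulLog (T a a).re := by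
      intro a
      rw [hTa]
      have := Real.concaveOn_negMulLog.le_map_sum (t := Finset.univ) (w := B a) (p := r)
        (fun m _ => hB0 a m) (hBr a) (fun m _ => hr m)
      simpa using this
    refine le_trans (le_of_eq ?_) (Finset.sum_le_sum fun a _ => key a)
    rw [Finset.sum_comm]
    simp only [← Finset.sum_mul, hBc, one_mul]

section pt
variable {m n : Type*} [Fintype m] [Fintype n] [DecidableEq m] [DecidableEq n]

lemma ptrace2_left (A : Matrix m m ℂ) (s : Matrix (m × n) (m × n) ℂ) :
    ptrace2 ((A ⊗ₖ (1 : Matrix n n ℂ)) * s) = A * ptrace2 s := by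
  ext i j
  simp only [ptrace2, mul_apply, kroneckerMap_apply, Fintype.sum_prod_type, one_apply, mul_ite,
    mul_one, mul_zero, ite_mul, zero_mul, Finset.sum_ite_eq, Finset.mem_univ, if_true,
    Finset.mul_sum]
  exact Finset.sum_comm

lemma ptrace2_right (A : Matrix m m ℂ) (s : Matrix (m × n) (m × n) ℂ) :
    ptrace2 (s * (A ⊗ₖ (1 : Matrix n n ℂ))) = ptrace2 s * A := by
  ext i j
  simp only [ptrace2, mul_apply, kroneckerMap_apply, Fintype.sum_prod_type, one_apply, mul_ite,
    mul_one, mul_zero, ite_mul, zero_mul, Finset.sum_ite_eq', Finset.mem_univ, if_true,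
    Finset.sum_mul]
  exact Finset.sum_comm

lemma ptrace2_cycl (B : Matrix n n ℂ) (s : Matrix (m × n) (m × n) ℂ) :
    ptrace2 (((1 : Matrix m m ℂ) ⊗ₖ B) * s) = ptrace2 (s * ((1 : Matrix m m ℂ) ⊗ₖ B)) := by
  ext i j
  simp only [ptrace2, mul_apply, kroneckerMap_apply, Fintype.sum_prod_type_right, one_apply,
    mul_ite, mul_one, one_mul, mul_zero, ite_mul, zero_mul, Finset.sum_ite_eq', Finset.sum_ite_eq,
    Finset.mem_univ, if_true]
  rw [Finset.sum_comm]
  simp only [mul_comm]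

lemma ptrace1_swap (s : Matrix (m × n) (m × n) ℂ) :
    ptrace1 s = ptrace2 (s.submatrix (Equiv.prodComm n m) (Equiv.prodComm n m)) := rfl

lemma kron_swap (A : Matrix m m ℂ) (B : Matrix n n ℂ) :
    (A ⊗ₖ B).submatrix (Equiv.prodComm n m) (Equiv.prodComm n m) = B ⊗ₖ A := by
  ext ⟨i, j⟩ ⟨k, l⟩
  simp [mul_comm]

lemma ptrace2_conj (A C : Matrix m m ℂ) (B D : Matrix n n ℂ) (s : Matrix (m × n) (m × n) ℂ)
    (h : D * B = 1) :
    ptrace2 ((A ⊗ₖ B) * s * (C ⊗ₖ D)) = A * ptrace2 s * C := by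
  have e1 : A ⊗ₖ B = (A ⊗ₖ (1 : Matrix n n ℂ)) * ((1 : Matrix m m ℂ) ⊗ₖ B) := by
    rw [← mul_kronecker_mul]; simp
  have e2 : C ⊗ₖ D = ((1 : Matrix m m ℂ) ⊗ₖ D) * (C ⊗ₖ (1 : Matrix n n ℂ)) := by
    rw [← mul_kronecker_mul]; simp
  rw [e1, e2, ← Matrix.mul_assoc, ptrace2_right, Matrix.mul_assoc (A ⊗ₖ _), Matrix.mul_assoc (A ⊗ₖ _),
    ptrace2_left, Matrix.mul_assoc _ s, ptrace2_cycl, Matrix.mul_assoc s, ← mul_kronecker_mul, h]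
  simp

lemma ptrace1_conj (A C : Matrix m m ℂ) (B D : Matrix n n ℂ) (s : Matrix (m × n) (m × n) ℂ)
    (h : C * A = 1) :
    ptrace1 ((A ⊗ₖ B) * s * (C ⊗ₖ D)) = B * ptrace1 s * D := by
  rw [ptrace1_swap, ptrace1_swap, ← ptrace2_conj B D A C _ h, ← kron_swap A B, ← kron_swap C D,
    submatrix_mul_equiv, submatrix_mul_equiv]

lemma trace_ptrace2 (s : Matrix (m × n) (m × n) ℂ) : (ptrace2 s).trace = s.trace := by
  simp [Matrix.trace, ptrace2, Fintype.sum_prod_type]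

lemma trace_ptrace1 (s : Matrix (m × n) (m × n) ℂ) : (ptrace1 s).trace = s.trace := by
  simp [Matrix.trace, ptrace1, Fintype.sum_prod_type_right]

lemma trace_left (A : Matrix m m ℂ) (s : Matrix (m × n) (m × n) ℂ) :
    ((A ⊗ₖ (1 : Matrix n n ℂ)) * s).trace = (A * ptrace2 s).trace := by
  rw [← ptrace2_left, trace_ptrace2]

lemma trace_right (B : Matrix n n ℂ) (s : Matrix (m × n) (m × n) ℂ) :
    (((1 : Matrix m m ℂ) ⊗ₖ B) * s).trace = (B * ptrace1 s).trace := by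
  have := ptrace1_conj (1 : Matrix m m ℂ) 1 B 1 s (by simp)
  rw [← trace_ptrace1 (_ * s)]
  simp only [one_kronecker_one, Matrix.mul_one] at this
  rw [this]

lemma ptrace2_herm {s : Matrix (m × n) (m × n) ℂ} (h : s.IsHermitian) : (ptrace2 s).IsHermitian := by
  ext i j
  simp only [conjTranspose_apply, ptrace2, star_sum]
  exact Finset.sum_congr rfl fun k _ => h.apply _ _

lemma ptrace1_herm {s : Matrix (m × n) (m × n) ℂ} (h : s.IsHermitian) : (ptrace1 s).IsHermitian := by
  ext i j
  simp only [conjTranspose_apply, ptrace1, star_sum]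
  exact Finset.sum_congr rfl fun k _ => h.apply _ _

end pt

lemma ent_eq {n : Type*} [Fintype n] [DecidableEq n] {A : Matrix n n ℂ} (h : A.IsHermitian) :
    vnEntropy A = ∑ i, Real.negMulLog (h.eigenvalues i) := by
  simp [vnEntropy, h, Real.negMulLog]

/-- spectral decomposition in a convenient form -/
lemma spec {n : Type*} [Fintype n] [DecidableEq n] {A : Matrix n n ℂ} (h : A.IsHermitian) :
    ∃ (U : Matrix n n ℂ) (e : n → ℝ), U * Uᴴ = 1 ∧ Uᴴ * U = 1 ∧
      A = U * diagonal (fun i => (e i : ℂ)) * Uᴴ ∧ Uᴴ * A * U = diagonal (fun i => (e i : ℂ)) ∧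
      vnEntropy A = ∑ i, Real.negMulLog (e i) ∧ (A.PosSemidef → ∀ i, 0 ≤ e i) ∧
      A.trace = ((∑ i, e i : ℝ) : ℂ) := by
  have hU1 : (h.eigenvectorUnitary : Matrix n n ℂ) * (h.eigenvectorUnitary : Matrix n n ℂ)ᴴ = 1 :=
    Unitary.mul_star_self_of_mem h.eigenvectorUnitary.2
  have hU2 : (h.eigenvectorUnitary : Matrix n n ℂ)ᴴ * (h.eigenvectorUnitary : Matrix n n ℂ) = 1 :=
    Unitary.star_mul_self_of_mem h.eigenvectorUnitary.2
  have hs : A = (h.eigenvectorUnitary : Matrix n n ℂ) * diagonal (fun i => (h.eigenvalues i : ℂ))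
      * (h.eigenvectorUnitary : Matrix n n ℂ)ᴴ := h.spectral_theorem
  refine ⟨h.eigenvectorUnitary, h.eigenvalues, hU1, hU2, hs, ?_, ent_eq h,
    fun hp i => hp.eigenvalues_nonneg i, ?_⟩
  · generalize (h.eigenvectorUnitary : Matrix n n ℂ) = U at *
    generalize h.eigenvalues = e at *
    rw [hs]
    calc Uᴴ * (U * diagonal (fun i => (e i : ℂ)) * Uᴴ) * U
        = (Uᴴ * U) * diagonal (fun i => (e i : ℂ)) * (Uᴴ * U) := by simp only [Matrix.mul_assoc]
      _ = _ := by simp [hU2]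
  · rw [h.trace_eq_sum_eigenvalues]; simp

lemma conj_unit {n X : Type*} [Fintype n] [DecidableEq n] [Fintype X] (K : X → Matrix n n ℂ)
    (U V : Matrix n n ℂ) (hU : Uᴴ * U = 1) (hV : V * Vᴴ = 1)
    (hK : ∑ x, K x * (K x)ᴴ = 1) : ∑ x, (Uᴴ * K x * V) * (Uᴴ * K x * V)ᴴ = 1 := by
  have : ∀ x, (Uᴴ * K x * V) * (Uᴴ * K x * V)ᴴ = Uᴴ * (K x * (K x)ᴴ) * U := by
    intro x
    simp only [conjTranspose_mul, conjTranspose_conjTranspose]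
    calc Uᴴ * K x * V * (Vᴴ * ((K x)ᴴ * U)) = Uᴴ * K x * (V * Vᴴ) * ((K x)ᴴ * U) := by
          simp only [Matrix.mul_assoc]
      _ = _ := by rw [hV]; simp only [Matrix.mul_assoc, Matrix.one_mul]
  simp only [this]
  rw [← Finset.sum_mul, ← Finset.mul_sum, hK, Matrix.mul_one, hU]

lemma kron_unit {m n : Type*} [Fintype m] [Fintype n] [DecidableEq m] [DecidableEq n]
    {A C : Matrix m m ℂ} {B D : Matrix n n ℂ} (h1 : A * C = 1) (h2 : B * D = 1) :
    (A ⊗ₖ B) * (C ⊗ₖ D) = 1 := by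
  rw [← mul_kronecker_mul, h1, h2, one_kronecker_one]

lemma entropy_ineq {w s d X : Type*} [Fintype w] [Fintype s] [Fintype d] [DecidableEq w]
    [DecidableEq s] [DecidableEq d] [Fintype X]
    (ρW : Matrix w w ℂ) (hρW : IsDensityMatrix ρW)
    (ρS : Matrix s s ℂ) (hρS : IsDensityMatrix ρS)
    (ρD : Matrix d d ℂ) (hρD : IsDensityMatrix ρD)
    (K : X → Matrix (w × s × d) (w × s × d) ℂ)
    (hK1 : ∑ x, K x * (K x)ᴴ = 1) (hK2 : ∑ x, (K x)ᴴ * K x = 1)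
    (σ : Matrix (w × s × d) (w × s × d) ℂ)
    (hσ : σ = ∑ x, K x * (ρW ⊗ₖ (ρS ⊗ₖ ρD)) * (K x)ᴴ) :
    vnEntropy ρW + (vnEntropy ρS + vnEntropy ρD) ≤
      vnEntropy (ptrace2 σ) + (vnEntropy (ptrace2 (ptrace1 σ)) + vnEntropy (ptrace1 (ptrace1 σ))) := by
  have hσh : σ.IsHermitian := by
    rw [hσ, Matrix.IsHermitian, conjTranspose_sum]
    refine Finset.sum_congr rfl fun x _ => ?_
    simp only [conjTranspose_mul, conjTranspose_conjTranspose, conjTranspose_kronecker,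
      hρW.1.1.eq, hρS.1.1.eq, hρD.1.1.eq, Matrix.mul_assoc]
  obtain ⟨VW, rW, vW1, vW2, vW3, -, vW5, vW6, vW7⟩ := spec hρW.1.1
  obtain ⟨VS, rS, vS1, vS2, vS3, -, vS5, vS6, vS7⟩ := spec hρS.1.1
  obtain ⟨VD, rD, vD1, vD2, vD3, -, vD5, vD6, vD7⟩ := spec hρD.1.1
  obtain ⟨UW, eW, uW1, uW2, -, uW4, uW5, -, -⟩ := spec (ptrace2_herm hσh)
  obtain ⟨US, eS, uS1, uS2, -, uS4, uS5, -, -⟩ := spec (ptrace2_herm (ptrace1_herm hσh))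
  obtain ⟨UD, eD, uD1, uD2, -, uD4, uD5, -, -⟩ := spec (ptrace1_herm (ptrace1_herm hσh))
  have sW : ∑ i, rW i = 1 := by rw [hρW.2] at vW7; exact_mod_cast vW7.symm
  have sS : ∑ i, rS i = 1 := by rw [hρS.2] at vS7; exact_mod_cast vS7.symm
  have sD : ∑ i, rD i = 1 := by rw [hρD.2] at vD7; exact_mod_cast vD7.symm
  have sSD : ∑ i : s × d, rS i.1 * rD i.2 = 1 := by
    rw [Fintype.sum_prod_type]
    simp only [← Finset.mul_sum, sD, mul_one, sS]
  have sWSD : ∑ i : w × s × d, rW i.1 * (rS i.2.1 * rD i.2.2) = 1 := by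
    rw [Fintype.sum_prod_type]
    simp only [← Finset.mul_sum, sSD, mul_one, sW]
  set V := VW ⊗ₖ (VS ⊗ₖ VD) with hV
  set U := UW ⊗ₖ (US ⊗ₖ UD) with hU
  have hVH : Vᴴ = VWᴴ ⊗ₖ (VSᴴ ⊗ₖ VDᴴ) := by simp only [hV, conjTranspose_kronecker]
  have hUH : Uᴴ = UWᴴ ⊗ₖ (USᴴ ⊗ₖ UDᴴ) := by simp only [hU, conjTranspose_kronecker]
  have V1 : V * Vᴴ = 1 := by rw [hVH]; exact kron_unit vW1 (kron_unit vS1 vD1)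
  have V2 : Vᴴ * V = 1 := by rw [hVH]; exact kron_unit vW2 (kron_unit vS2 vD2)
  have U1 : U * Uᴴ = 1 := by rw [hUH]; exact kron_unit uW1 (kron_unit uS1 uD1)
  have U2 : Uᴴ * U = 1 := by rw [hUH]; exact kron_unit uW2 (kron_unit uS2 uD2)
  set r : w × s × d → ℝ := fun i => rW i.1 * (rS i.2.1 * rD i.2.2) with hr
  have hρ : ρW ⊗ₖ (ρS ⊗ₖ ρD) = V * diagonal (fun i => (r i : ℂ)) * Vᴴ := by
    have : diagonal (fun i => (r i : ℂ)) = diagonal (fun i => (rW i : ℂ)) ⊗ₖ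
        (diagonal (fun i => (rS i : ℂ)) ⊗ₖ diagonal (fun i => (rD i : ℂ))) := by
      rw [diagonal_kronecker_diagonal, diagonal_kronecker_diagonal]
      simp [hr]
    rw [this, hVH, hV, ← mul_kronecker_mul, ← mul_kronecker_mul, ← mul_kronecker_mul,
      ← mul_kronecker_mul, ← vW3, ← vS3, ← vD3]
  set T := Uᴴ * σ * U with hT
  have hTM : T = ∑ x, (Uᴴ * K x * V) * diagonal (fun i => (r i : ℂ)) * (Uᴴ * K x * V)ᴴ := by
    rw [hT, hσ, hρ, Finset.mul_sum, Finset.sum_mul]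
    refine Finset.sum_congr rfl fun x _ => ?_
    simp only [conjTranspose_mul, conjTranspose_conjTranspose, Matrix.mul_assoc]
  have hM2 : ∑ x, (Uᴴ * K x * V)ᴴ * (Uᴴ * K x * V) = 1 := by
    have := conj_unit (fun x => (K x)ᴴ) V U V2 U1 (by simpa using hK2)
    simpa [conjTranspose_mul, Matrix.mul_assoc] using this
  obtain ⟨t0, t1, t2⟩ := unital (fun x => Uᴴ * K x * V) (conj_unit K U V U2 V1 hK1) hM2 r
    (fun i => mul_nonneg (vW6 hρW.1 _) (mul_nonneg (vS6 hρS.1 _) (vD6 hρD.1 _))) T hTM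
  have T2 : ptrace2 T = diagonal (fun i => (eW i : ℂ)) := by
    rw [hT, hUH, hU, ptrace2_conj _ _ _ _ _ (kron_unit uS1 uD1), uW4]
  have T1 : ptrace1 T = (USᴴ ⊗ₖ UDᴴ) * ptrace1 σ * (US ⊗ₖ UD) := by
    rw [hT, hUH, hU, ptrace1_conj _ _ _ _ _ uW1]
  have T12 : ptrace2 (ptrace1 T) = diagonal (fun i => (eS i : ℂ)) := by
    rw [T1, ptrace2_conj _ _ _ _ _ uD1, uS4]
  have T11 : ptrace1 (ptrace1 T) = diagonal (fun i => (eD i : ℂ)) := by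
    rw [T1, ptrace1_conj _ _ _ _ _ uS1, uD4]
  have mW : ∀ a, ∑ b, (T (a, b) (a, b)).re = eW a := by
    intro a
    have h := congrArg Complex.re (congrFun (congrFun T2 a) a)
    simpa [ptrace2] using h
  have mS : ∀ a, ∑ b, ∑ c, (T (c, a, b) (c, a, b)).re = eS a := by
    intro a
    have h := congrArg Complex.re (congrFun (congrFun T12 a) a)
    simpa [ptrace2, ptrace1] using h
  have mD : ∀ a, ∑ b, ∑ c, (T (c, b, a) (c, b, a)).re = eD a := by
    intro a
    have h := congrArg Complex.re (congrFun (congrFun T11 a) a)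
    simpa [ptrace2, ptrace1] using h
  have tot : ∑ i, (T i i).re = 1 := by rw [t1, hr, sWSD]
  have s1 := subadd (fun i => (T i i).re) t0 tot
  have s2 := subadd (fun i : s × d => ∑ c, (T (c, i) (c, i)).re)
    (fun i => Finset.sum_nonneg fun _ _ => t0 _) (by rw [← tot]; exact (Fintype.sum_prod_type_right (fun i => (T i i).re)).symm)
  simp only [mW] at s1
  simp only [mS, mD] at s2
  have p1 := prodEnt rW (fun i : s × d => rS i.1 * rD i.2) sW sSD
  have p2 := prodEnt rS rD sS sD
  rw [vW5, vS5, vD5, uW5, uS5, uD5, ← p2, ← p1]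
  linarith

lemma outer_density {d : Type*} [Fintype d] (ψ : d → ℂ) (hψ : star ψ ⬝ᵥ ψ = 1) :
    IsDensityMatrix (outer ψ) := by
  refine ⟨posSemidef_vecMulVec_self_star ψ, ?_⟩
  rw [outer, trace_vecMulVec, dotProduct_comm, hψ]

lemma outer_entropy {d : Type*} [Fintype d] [DecidableEq d] (ψ : d → ℂ) (hψ : star ψ ⬝ᵥ ψ = 1) :
    vnEntropy (outer ψ) = 0 := by
  obtain ⟨U, e, u1, u2, u3, u4, u5, -, -⟩ := spec (outer_density ψ hψ).1.1
  have hid : outer ψ * outer ψ = outer ψ := by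
    rw [outer, vecMulVec_mul_vecMulVec, hψ, one_smul]
  have h : diagonal (fun i => (e i : ℂ)) * diagonal (fun i => (e i : ℂ))
      = diagonal (fun i => (e i : ℂ)) := by
    rw [← u4]
    calc Uᴴ * outer ψ * U * (Uᴴ * outer ψ * U) = Uᴴ * outer ψ * (U * Uᴴ) * (outer ψ * U) := by
          simp only [Matrix.mul_assoc]
      _ = Uᴴ * (outer ψ * outer ψ) * U := by rw [u1]; simp only [Matrix.mul_assoc, Matrix.one_mul]
      _ = _ := by rw [hid]
  rw [u5]
  refine Finset.sum_eq_zero fun i _ => ?_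
  have hi := congrFun (congrFun h i) i
  simp only [diagonal_mul_diagonal, diagonal_apply_eq] at hi
  have hi' : e i * e i = e i := by exact_mod_cast hi
  have hi2 : e i = 0 ∨ e i = 1 := by
    rcases eq_or_ne (e i) 0 with h0 | h0
    · exact Or.inl h0
    · exact Or.inr (mul_left_cancel₀ h0 (by rw [hi', mul_one]))
  rcases hi2 with h | h <;> simp [h]

lemma trace_total {w s d : Type*} [Fintype w] [Fintype s] [Fintype d] [DecidableEq w]
    [DecidableEq s] [DecidableEq d] (HW : Matrix w w ℂ) (HS : Matrix s s ℂ) (HD : Matrix d d ℂ)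
    (σ : Matrix (w × s × d) (w × s × d) ℂ) :
    ((HW ⊗ₖ ((1 : Matrix s s ℂ) ⊗ₖ (1 : Matrix d d ℂ))
        + (1 : Matrix w w ℂ) ⊗ₖ (HS ⊗ₖ (1 : Matrix d d ℂ))
        + (1 : Matrix w w ℂ) ⊗ₖ ((1 : Matrix s s ℂ) ⊗ₖ HD)) * σ).trace
      = (HW * ptrace2 σ).trace + (HS * ptrace2 (ptrace1 σ)).trace
        + (HD * ptrace1 (ptrace1 σ)).trace := by
  rw [add_mul, add_mul, trace_add, trace_add, one_kronecker_one, trace_left, trace_right,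
    trace_right, trace_left, trace_right]

lemma ptrace2_kron {m n : Type*} [Fintype m] [Fintype n] (A : Matrix m m ℂ) (B : Matrix n n ℂ)
    (h : B.trace = 1) : ptrace2 (A ⊗ₖ B) = A := by
  ext i j
  simp only [ptrace2, kroneckerMap_apply, ← Finset.mul_sum]
  have : ∑ k, B k k = 1 := h
  rw [this, mul_one]

lemma ptrace1_kron {m n : Type*} [Fintype m] [Fintype n] (A : Matrix m m ℂ) (B : Matrix n n ℂ)
    (h : A.trace = 1) : ptrace1 (A ⊗ₖ B) = B := by
  ext i j
  simp only [ptrace1, kroneckerMap_apply, ← Finset.sum_mul]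
  have : ∑ k, A k k = 1 := h
  rw [this, one_mul]

/-- A channel commuting with `H` preserves the mean of `H`. -/
lemma trace_channel {n X : Type*} [Fintype n] [DecidableEq n] [Fintype X]
    (K : X → Matrix n n ℂ) (hK2 : ∑ x, (K x)ᴴ * K x = 1) (H ρ : Matrix n n ℂ)
    (hc : ∀ x, K x * H = H * K x) :
    (H * ∑ x, K x * ρ * (K x)ᴴ).trace = (H * ρ).trace := by
  have : ∀ x, (H * (K x * ρ * (K x)ᴴ)).trace = (((K x)ᴴ * K x) * (H * ρ)).trace := by
    intro x
    rw [← Matrix.mul_assoc, ← Matrix.mul_assoc, ← hc, Matrix.trace_mul_comm]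
    simp only [Matrix.mul_assoc]
  rw [Finset.mul_sum, trace_sum]
  simp only [this]
  rw [← trace_sum, ← Finset.sum_mul, hK2, Matrix.one_mul]

lemma one_kron_sum {m n X : Type*} [Fintype X] [DecidableEq m] (B : X → Matrix n n ℂ) :
    ∑ x, (1 : Matrix m m ℂ) ⊗ₖ B x = (1 : Matrix m m ℂ) ⊗ₖ ∑ x, B x := by
  ext i j
  simp only [Matrix.sum_apply, kroneckerMap_apply, Finset.mul_sum]

end NetWork

/-- Eq. (50): the net coarse-grained work extracted per cycle, after paying the
Landauer erasure cost of the demon's memory, is bounded by the free-energy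
decrease of the system. -/
theorem net_coarse_grained_work_second_law
    {dW dS dD : ℕ} {X : Type*} [Fintype X]
    (HW : Matrix (Fin dW) (Fin dW) ℂ) (HS : Matrix (Fin dS) (Fin dS) ℂ)
    (HD : Matrix (Fin dD) (Fin dD) ℂ)
    (hHW : HW.IsHermitian) (hHS : HS.IsHermitian) (hHD : HD.IsHermitian)
    (kT : ℝ) (hkT : 0 < kT)
    (ρW : Matrix (Fin dW) (Fin dW) ℂ) (hρW : IsDensityMatrix ρW)
    (ρS : Matrix (Fin dS) (Fin dS) ℂ) (hρS : IsDensityMatrix ρS)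
    (ψ : Fin dD → ℂ) (hψ : star ψ ⬝ᵥ ψ = 1)
    (P : X → Matrix (Fin dD) (Fin dD) ℂ)
    (hPherm : ∀ x, (P x).IsHermitian)
    (hPidem : ∀ x, P x * P x = P x)
    (hPorth : ∀ x y, x ≠ y → P x * P y = 0)
    (hPsum : ∑ x, P x = 1)
    (hPcomm : ∀ x, P x * HD = HD * P x)
    (G : Matrix (Fin dW × Fin dS × Fin dD) (Fin dW × Fin dS × Fin dD) ℂ)
    (hG : G ∈ Matrix.unitaryGroup (Fin dW × Fin dS × Fin dD) ℂ)
    (hGcomm : G * (HW ⊗ₖ ((1 : Matrix (Fin dS) (Fin dS) ℂ) ⊗ₖ (1 : Matrix (Fin dD) (Fin dD) ℂ))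
        + (1 : Matrix (Fin dW) (Fin dW) ℂ) ⊗ₖ (HS ⊗ₖ (1 : Matrix (Fin dD) (Fin dD) ℂ))
        + (1 : Matrix (Fin dW) (Fin dW) ℂ) ⊗ₖ ((1 : Matrix (Fin dS) (Fin dS) ℂ) ⊗ₖ HD))
      = (HW ⊗ₖ ((1 : Matrix (Fin dS) (Fin dS) ℂ) ⊗ₖ (1 : Matrix (Fin dD) (Fin dD) ℂ))
        + (1 : Matrix (Fin dW) (Fin dW) ℂ) ⊗ₖ (HS ⊗ₖ (1 : Matrix (Fin dD) (Fin dD) ℂ))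
        + (1 : Matrix (Fin dW) (Fin dW) ℂ) ⊗ₖ ((1 : Matrix (Fin dS) (Fin dS) ℂ) ⊗ₖ HD)) * G)
    (σ : Matrix (Fin dW × Fin dS × Fin dD) (Fin dW × Fin dS × Fin dD) ℂ)
    (hσ : σ = ∑ x, ((1 : Matrix (Fin dW) (Fin dW) ℂ) ⊗ₖ
            ((1 : Matrix (Fin dS) (Fin dS) ℂ) ⊗ₖ P x))
        * (G * (ρW ⊗ₖ (ρS ⊗ₖ outer ψ)) * Gᴴ)
        * ((1 : Matrix (Fin dW) (Fin dW) ℂ) ⊗ₖ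
            ((1 : Matrix (Fin dS) (Fin dS) ℂ) ⊗ₖ P x)))
    (Q : ℝ) (hQ : kT * vnEntropy (ptrace1 (ptrace1 σ)) ≤ Q) :
    (freeEnergy kT HW (ptrace2 σ) - freeEnergy kT HW ρW)
      - ((Matrix.trace (HD * (outer ψ - ptrace1 (ptrace1 σ)))).re + Q)
    ≤ freeEnergy kT HS ρS - freeEnergy kT HS (ptrace2 (ptrace1 σ)) := by
  classical
  have hG1 : G * Gᴴ = 1 := Unitary.mul_star_self_of_mem hG
  have hG2 : Gᴴ * G = 1 := Unitary.star_mul_self_of_mem hG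
  set R : X → Matrix (Fin dW × Fin dS × Fin dD) (Fin dW × Fin dS × Fin dD) ℂ :=
    fun x => (1 : Matrix (Fin dW) (Fin dW) ℂ) ⊗ₖ ((1 : Matrix (Fin dS) (Fin dS) ℂ) ⊗ₖ P x) with hR
  have hRh : ∀ x, (R x)ᴴ = R x := by
    intro x
    simp only [hR, conjTranspose_kronecker, conjTranspose_one, (hPherm x).eq]
  have hRi : ∀ x, R x * R x = R x := by
    intro x
    simp only [hR, ← mul_kronecker_mul, Matrix.one_mul, hPidem]
  have hRs : ∑ x, R x = 1 := by
    simp only [hR, NetWork.one_kron_sum, hPsum, one_kronecker_one]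
  have hK1 : ∑ x, (R x * G) * (R x * G)ᴴ = 1 := by
    rw [← hRs]
    refine Finset.sum_congr rfl fun x _ => ?_
    rw [conjTranspose_mul, hRh, Matrix.mul_assoc, ← Matrix.mul_assoc G, hG1, Matrix.one_mul, hRi]
  have hK2 : ∑ x, (R x * G)ᴴ * (R x * G) = 1 := by
    have : ∀ x, (R x * G)ᴴ * (R x * G) = Gᴴ * R x * G := by
      intro x
      rw [conjTranspose_mul, hRh, Matrix.mul_assoc, ← Matrix.mul_assoc (R x), hRi, Matrix.mul_assoc]
    simp only [this]
    rw [← Finset.sum_mul, ← Finset.mul_sum, hRs, Matrix.mul_one, hG2]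
  have hσ' : σ = ∑ x, (R x * G) * (ρW ⊗ₖ (ρS ⊗ₖ outer ψ)) * (R x * G)ᴴ := by
    rw [hσ]
    refine Finset.sum_congr rfl fun x _ => ?_
    rw [conjTranspose_mul, hRh]
    simp only [hR, Matrix.mul_assoc]
  have hψd := NetWork.outer_density ψ hψ
  have hent := NetWork.entropy_ineq ρW hρW ρS hρS (outer ψ) hψd (fun x => R x * G) hK1 hK2 σ hσ'
  rw [NetWork.outer_entropy ψ hψ] at hent
  have t1 := NetWork.trace_total HW HS HD σ
  have t2 := NetWork.trace_total HW HS HD (ρW ⊗ₖ (ρS ⊗ₖ outer ψ))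
  have hSD : (ρS ⊗ₖ outer ψ).trace = 1 := by rw [trace_kronecker, hρS.2, hψd.2, mul_one]
  rw [NetWork.ptrace2_kron _ _ hSD, NetWork.ptrace1_kron _ _ hρW.2,
    NetWork.ptrace2_kron _ _ hψd.2, NetWork.ptrace1_kron _ _ hρS.2] at t2
  have hRc : ∀ x, R x * (HW ⊗ₖ ((1 : Matrix (Fin dS) (Fin dS) ℂ) ⊗ₖ (1 : Matrix (Fin dD) (Fin dD) ℂ))
        + (1 : Matrix (Fin dW) (Fin dW) ℂ) ⊗ₖ (HS ⊗ₖ (1 : Matrix (Fin dD) (Fin dD) ℂ))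
        + (1 : Matrix (Fin dW) (Fin dW) ℂ) ⊗ₖ ((1 : Matrix (Fin dS) (Fin dS) ℂ) ⊗ₖ HD))
      = (HW ⊗ₖ ((1 : Matrix (Fin dS) (Fin dS) ℂ) ⊗ₖ (1 : Matrix (Fin dD) (Fin dD) ℂ))
        + (1 : Matrix (Fin dW) (Fin dW) ℂ) ⊗ₖ (HS ⊗ₖ (1 : Matrix (Fin dD) (Fin dD) ℂ))
        + (1 : Matrix (Fin dW) (Fin dW) ℂ) ⊗ₖ ((1 : Matrix (Fin dS) (Fin dS) ℂ) ⊗ₖ HD)) * R x := by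
    intro x
    simp only [hR, mul_add, add_mul, ← mul_kronecker_mul, Matrix.one_mul, Matrix.mul_one, hPcomm]
  have t3 : ((HW ⊗ₖ ((1 : Matrix (Fin dS) (Fin dS) ℂ) ⊗ₖ (1 : Matrix (Fin dD) (Fin dD) ℂ))
        + (1 : Matrix (Fin dW) (Fin dW) ℂ) ⊗ₖ (HS ⊗ₖ (1 : Matrix (Fin dD) (Fin dD) ℂ))
        + (1 : Matrix (Fin dW) (Fin dW) ℂ) ⊗ₖ ((1 : Matrix (Fin dS) (Fin dS) ℂ) ⊗ₖ HD)) * σ).trace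
      = ((HW ⊗ₖ ((1 : Matrix (Fin dS) (Fin dS) ℂ) ⊗ₖ (1 : Matrix (Fin dD) (Fin dD) ℂ))
        + (1 : Matrix (Fin dW) (Fin dW) ℂ) ⊗ₖ (HS ⊗ₖ (1 : Matrix (Fin dD) (Fin dD) ℂ))
        + (1 : Matrix (Fin dW) (Fin dW) ℂ) ⊗ₖ ((1 : Matrix (Fin dS) (Fin dS) ℂ) ⊗ₖ HD))
          * (ρW ⊗ₖ (ρS ⊗ₖ outer ψ))).trace := by
    rw [hσ']
    refine NetWork.trace_channel (fun x => R x * G) hK2 _ _ fun x => ?_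
    rw [Matrix.mul_assoc, hGcomm, ← Matrix.mul_assoc, hRc, Matrix.mul_assoc]
  rw [t1, t2] at t3
  have t4 := congrArg Complex.re t3
  simp only [Complex.add_re] at t4
  have hent' := mul_le_mul_of_nonneg_left hent hkT.le
  simp only [mul_add, mul_zero, add_zero] at hent'
  simp only [freeEnergy, mul_sub, trace_sub, Complex.sub_re]
  linarith
end
end
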